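/- Let q ≥ 2, suppose A_K > 0, and let θ > 0. Then (1/N)·|{n : m_K(n) ≤ θ}| ≤ 4^{K/q}·∏_{k=1}^K ρ_k^{(1−θ)/q}·(1−ρ_k)^{(1+θ)/q}. -/

import Mathlib

/-! Unrolling the recursion gives `w_K(n) · ∏ Z_k = w_0(n) · exp(-g_K(n))`; summing over `n` shows
that `∏ Z_k` is the exponential moment of `-g_K` under the initial weights. The Chernoff bound
therefore gives `P[g_K ≤ θ A_K] ≤ exp(θ A_K) · ∏ Z_k = ∏ exp(θ α_k) Z_k`, which is estimated epoch
by epoch: `exp(θ α) Z = ((1-ρ)^(1-2/q) + ρ^(1-2/q)) · ρ^((1-θ)/q) (1-ρ)^((1+θ)/q)`, and concavity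
of `x ↦ x^(1-2/q)` bounds the first factor by its value `4^(1/q)` at `ρ = 1/2`. -/

lemma mul_prod_range_eq_of_succ_mul_eq {M : Type*} [CommMonoid M] {a b c : ℕ → M}
    (h : ∀ k, a (k + 1) * b k = a k * c k) (K : ℕ) :
    a K * ∏ k ∈ Finset.range K, b k = a 0 * ∏ k ∈ Finset.range K, c k := by
  induction K with
  | zero => simp
  | succ K ih =>
    rw [Finset.prod_range_succ_comm, ← mul_assoc, h, mul_right_comm, ih, mul_assoc,
      Finset.prod_range_succ]

lemma sum_filter_le_le_exp_mul_sum_mul_exp_neg {ι : Type*} {s : Finset ι} {p : ι → ℝ}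
    (hp : ∀ n ∈ s, 0 ≤ p n) (g : ι → ℝ) (t : ℝ) :
    ∑ n ∈ s with g n ≤ t, p n ≤ Real.exp t * ∑ n ∈ s, p n * Real.exp (-g n) := by
  rw [Finset.sum_filter, Finset.mul_sum]
  refine Finset.sum_le_sum fun n hn => ?_
  have hpn := hp n hn
  split_ifs with hg
  · rw [mul_left_comm, ← Real.exp_add]
    exact le_mul_of_one_le_right hpn (Real.one_le_exp (by linarith))
  · positivity

lemma sum_mul_exp_neg_mul_sign {ι : Type*} (s : Finset ι) (p : ι → ℝ) {σ : ι → ℝ}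
    (hσ : ∀ n ∈ s, σ n = 1 ∨ σ n = -1) (a : ℝ) :
    ∑ n ∈ s, p n * Real.exp (-a * σ n) =
      (∑ n ∈ s, p n - ∑ n ∈ s with σ n = -1, p n) * Real.exp (-a) +
        (∑ n ∈ s with σ n = -1, p n) * Real.exp a := by
  rw [Finset.sum_filter, ← Finset.sum_sub_distrib, Finset.sum_mul, Finset.sum_mul,
    ← Finset.sum_add_distrib]
  refine Finset.sum_congr rfl fun n hn => ?_
  rcases hσ n hn with h | h <;> norm_num [h]

lemma rpow_add_rpow_le_two_rpow_mul_add_rpow {x y p : ℝ} (hx : 0 ≤ x) (hy : 0 ≤ y)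
    (hp₀ : 0 ≤ p) (hp₁ : p ≤ 1) : x ^ p + y ^ p ≤ 2 ^ (1 - p) * (x + y) ^ p := by
  have midpoint : 2⁻¹ * x ^ p + 2⁻¹ * y ^ p ≤ (2⁻¹ * x + 2⁻¹ * y) ^ p :=
    (Real.concaveOn_rpow hp₀ hp₁).2 hx hy (by norm_num) (by norm_num) (by norm_num)
  calc x ^ p + y ^ p
      = 2 * (2⁻¹ * x ^ p + 2⁻¹ * y ^ p) := by ring
    _ ≤ 2 * (2⁻¹ * x + 2⁻¹ * y) ^ p := by gcongr
    _ = 2 ^ (1 - p) * (x + y) ^ p := by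
      rw [← mul_add, Real.mul_rpow (by norm_num) (by positivity), Real.inv_rpow (by norm_num),
        Real.rpow_sub (by norm_num), Real.rpow_one]
      ring

lemma exp_mul_log_div_mul_add {x y : ℝ} (hx : 0 < x) (hy : 0 < y) (c θ : ℝ) :
    Real.exp (θ * (c * Real.log (x / y))) *
        (x * Real.exp (-(c * Real.log (x / y))) + y * Real.exp (c * Real.log (x / y))) =
      (x ^ (1 - 2 * c) + y ^ (1 - 2 * c)) * (y ^ ((1 - θ) * c) * x ^ ((1 + θ) * c)) := by
  obtain ⟨u, rfl⟩ : ∃ u, Real.exp u = x := ⟨_, Real.exp_log hx⟩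
  obtain ⟨v, rfl⟩ : ∃ v, Real.exp v = y := ⟨_, Real.exp_log hy⟩
  simp only [← Real.exp_sub, Real.log_exp, ← Real.exp_mul, mul_add, add_mul, ← Real.exp_add]
  ring_nf

lemma exp_mul_log_odds_mul_add_le {c ρ : ℝ} (hc₀ : 0 ≤ c) (hc₁ : c ≤ 1 / 2)
    (hρ₀ : 0 < ρ) (hρ₁ : ρ < 1) (θ : ℝ) :
    Real.exp (θ * (c * Real.log ((1 - ρ) / ρ))) *
        ((1 - ρ) * Real.exp (-(c * Real.log ((1 - ρ) / ρ))) +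
          ρ * Real.exp (c * Real.log ((1 - ρ) / ρ))) ≤
      4 ^ c * (ρ ^ ((1 - θ) * c) * (1 - ρ) ^ ((1 + θ) * c)) := by
  have hρ' : 0 < 1 - ρ := sub_pos.2 hρ₁
  have four_rpow : (4 : ℝ) ^ c = 2 ^ (2 * c) := by
    rw [Real.rpow_mul (by norm_num)]
    norm_num
  have power_sum : (1 - ρ) ^ (1 - 2 * c) + ρ ^ (1 - 2 * c) ≤ 4 ^ c := by
    simpa [four_rpow] using
      rpow_add_rpow_le_two_rpow_mul_add_rpow (p := 1 - 2 * c) hρ'.le hρ₀.le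
        (by linarith) (by linarith)
  rw [exp_mul_log_div_mul_add hρ' hρ₀]
  gcongr

/-- A run of the APW sample-reweighting scheme with parameter `q` on a finite sample set `ι`,
started from an arbitrary probability vector `w 0`. Epochs are numbered from `0`: `β k`, `ρ k`,
`α k` and `Z k` are the labels (`1` easy, `-1` hard), hard mass, step size and normalizer of the
update from `w k` to `w (k + 1)`. -/
structure IsAPW {ι : Type*} [Fintype ι] (q : ℝ) (β : ℕ → ι → ℝ) (α ρ Z : ℕ → ℝ)
    (w : ℕ → ι → ℝ) : Prop where
  label : ∀ k n, β k n = 1 ∨ β k n = -1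
  weight_zero_nonneg : ∀ n, 0 ≤ w 0 n
  sum_weight_zero : ∑ n, w 0 n = 1
  normalizer : ∀ k, Z k = ∑ n, w k n * Real.exp (-(α k) * β k n)
  weight_succ : ∀ k n, w (k + 1) n = w k n * Real.exp (-(α k) * β k n) / Z k
  hardMass : ∀ k, ρ k = ∑ n with β k n = -1, w k n
  hardMass_pos : ∀ k, 0 < ρ k
  hardMass_lt_one : ∀ k, ρ k < 1
  stepSize : ∀ k, α k = 1 / q * Real.log ((1 - ρ k) / ρ k)

namespace IsAPW

variable {ι : Type*} [Fintype ι] {q : ℝ} {β : ℕ → ι → ℝ} {α ρ Z : ℕ → ℝ} {w : ℕ → ι → ℝ}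

lemma normalizer_eq_of_sum_weight (h : IsAPW q β α ρ Z w) {k : ℕ} (hk : ∑ n, w k n = 1) :
    Z k = (1 - ρ k) * Real.exp (-α k) + ρ k * Real.exp (α k) := by
  rw [h.normalizer, sum_mul_exp_neg_mul_sign _ _ (fun n _ => h.label k n), hk, ← h.hardMass]

lemma normalizer_pos_of_sum_weight (h : IsAPW q β α ρ Z w) {k : ℕ} (hk : ∑ n, w k n = 1) :
    0 < Z k := by
  have hρ₀ := h.hardMass_pos k
  have hρ₁ := sub_pos.2 (h.hardMass_lt_one k)
  rw [h.normalizer_eq_of_sum_weight hk]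
  positivity

lemma sum_weight (h : IsAPW q β α ρ Z w) (k : ℕ) : ∑ n, w k n = 1 := by
  induction k with
  | zero => exact h.sum_weight_zero
  | succ k ih =>
    simp only [h.weight_succ]
    rw [← Finset.sum_div, ← h.normalizer, div_self (h.normalizer_pos_of_sum_weight ih).ne']

lemma normalizer_pos (h : IsAPW q β α ρ Z w) (k : ℕ) : 0 < Z k :=
  h.normalizer_pos_of_sum_weight (h.sum_weight k)

lemma weight_mul_prod_normalizer (h : IsAPW q β α ρ Z w) (K : ℕ) (n : ι) :
    w K n * ∏ k ∈ Finset.range K, Z k =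
      w 0 n * Real.exp (-∑ k ∈ Finset.range K, α k * β k n) := by
  have step (k : ℕ) : w (k + 1) n * Z k = w k n * Real.exp (-(α k * β k n)) := by
    rw [h.weight_succ, div_mul_cancel₀ _ (h.normalizer_pos k).ne', neg_mul]
  rw [mul_prod_range_eq_of_succ_mul_eq (a := fun k => w k n) step, ← Real.exp_sum,
    Finset.sum_neg_distrib]

lemma prod_normalizer (h : IsAPW q β α ρ Z w) (K : ℕ) :
    ∏ k ∈ Finset.range K, Z k =
      ∑ n, w 0 n * Real.exp (-∑ k ∈ Finset.range K, α k * β k n) := by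
  simp only [← h.weight_mul_prod_normalizer, ← Finset.sum_mul, h.sum_weight, one_mul]

lemma exp_mul_stepSize_mul_normalizer_le (h : IsAPW q β α ρ Z w) (hq : 2 ≤ q) (θ : ℝ) (k : ℕ) :
    Real.exp (θ * α k) * Z k ≤
      4 ^ (1 / q) * (ρ k ^ ((1 - θ) / q) * (1 - ρ k) ^ ((1 + θ) / q)) := by
  rw [h.normalizer_eq_of_sum_weight (h.sum_weight k), h.stepSize,
    ← mul_one_div (1 - θ), ← mul_one_div (1 + θ)]
  exact exp_mul_log_odds_mul_add_le (by positivity) (one_div_le_one_div_of_le two_pos hq)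
    (h.hardMass_pos k) (h.hardMass_lt_one k) θ

end IsAPW

theorem stmt_9_general {ι : Type*} [Fintype ι] {q : ℝ} (hq : 2 ≤ q) {β : ℕ → ι → ℝ}
    {α ρ Z : ℕ → ℝ} {w : ℕ → ι → ℝ} (h : IsAPW q β α ρ Z w) (K : ℕ) (θ : ℝ) :
    ∑ n with ∑ k ∈ Finset.range K, α k * β k n ≤ θ * ∑ k ∈ Finset.range K, α k, w 0 n ≤
      4 ^ ((K : ℝ) / q) *
        ∏ k ∈ Finset.range K, ρ k ^ ((1 - θ) / q) * (1 - ρ k) ^ ((1 + θ) / q) :=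
  calc _ ≤ Real.exp (θ * ∑ k ∈ Finset.range K, α k) * ∏ k ∈ Finset.range K, Z k := by
        rw [h.prod_normalizer]
        exact sum_filter_le_le_exp_mul_sum_mul_exp_neg (fun n _ => h.weight_zero_nonneg n) _ _
    _ = ∏ k ∈ Finset.range K, Real.exp (θ * α k) * Z k := by
        rw [Finset.mul_sum, Real.exp_sum, Finset.prod_mul_distrib]
    _ ≤ ∏ k ∈ Finset.range K,
          4 ^ (1 / q) * (ρ k ^ ((1 - θ) / q) * (1 - ρ k) ^ ((1 + θ) / q)) :=
        Finset.prod_le_prod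
          (fun k _ => mul_nonneg (Real.exp_nonneg _) (h.normalizer_pos k).le)
          (fun k _ => h.exp_mul_stepSize_mul_normalizer_le hq θ k)
    _ = _ := by
        rw [Finset.prod_mul_distrib, Finset.prod_const, Finset.card_range,
          ← Real.rpow_mul_natCast (by norm_num), one_div_mul_eq_div]

/-- If `q ≥ 2`, `A_K > 0` and `θ > 0`, then
`(1/N)·|{n : m_K(n) ≤ θ}| ≤ 4^{K/q}·∏_{k=1}^K ρ_k^{(1−θ)/q}·(1−ρ_k)^{(1+θ)/q}`. -/
theorem stmt_9 (N : ℕ) (hN : 1 ≤ N) (q : ℝ) (hq : 2 ≤ q)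
    (β : ℕ → Fin N → ℝ) (α ρ γ Z : ℕ → ℝ) (w : ℕ → Fin N → ℝ)
    (hβ : ∀ k n, β (k + 1) n = 1 ∨ β (k + 1) n = -1)
    (hw0 : ∀ n, w 0 n = 1 / N)
    (hZ : ∀ k, Z (k + 1) = ∑ n, w k n * Real.exp (-(α (k + 1)) * β (k + 1) n))
    (hwrec : ∀ k n,
      w (k + 1) n = w k n * Real.exp (-(α (k + 1)) * β (k + 1) n) / Z (k + 1))
    (hρ : ∀ k, ρ (k + 1) =
      ∑ n ∈ Finset.univ.filter (fun n => β (k + 1) n = -1), w k n)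
    (hρ0 : ∀ k, 0 < ρ (k + 1)) (hρ1 : ∀ k, ρ (k + 1) < 1)
    (hα : ∀ k, α (k + 1) = (1 / q) * Real.log ((1 - ρ (k + 1)) / ρ (k + 1)))
    (hγ : ∀ k, γ (k + 1) = 1 / 2 - ρ (k + 1))
    (K : ℕ) (hK : 1 ≤ K)
    (hA : 0 < ∑ k ∈ Finset.range K, α (k + 1))
    (θ : ℝ) (hθ : 0 < θ) :
    (1 / (N : ℝ)) *
        ((Finset.univ.filter (fun n : Fin N =>
          (∑ k ∈ Finset.range K, α (k + 1) * β (k + 1) n) /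
            (∑ k ∈ Finset.range K, α (k + 1)) ≤ θ)).card : ℝ)
      ≤ (4 : ℝ) ^ ((K : ℝ) / q) *
          ∏ k ∈ Finset.range K,
            (ρ (k + 1)) ^ ((1 - θ) / q) * (1 - ρ (k + 1)) ^ ((1 + θ) / q) := by
  have hN' : (N : ℝ) ≠ 0 := Nat.cast_ne_zero.2 (by omega)
  have run : IsAPW q (fun k => β (k + 1)) (fun k => α (k + 1)) (fun k => ρ (k + 1))
      (fun k => Z (k + 1)) w :=
    { label := hβ
      weight_zero_nonneg := fun n => by rw [hw0]; positivity
      sum_weight_zero := by simp [hw0, hN']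
      normalizer := hZ
      weight_succ := hwrec
      hardMass := hρ
      hardMass_pos := hρ0
      hardMass_lt_one := hρ1
      stepSize := hα }
  simpa [hw0, div_le_iff₀ hA, mul_comm] using stmt_9_general hq run K θ
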